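/- arXiv:0909.2848 — 3 statements merged into one kernel-verified Lean document; each statement's English description precedes it below -/
import Mathlib

section
/- Let ν₀ ∈ (0,1], set ε₀ := √(ν₀/2), let M > 0 and let u ∈ C¹(closure(B_R)) with 0 ≤ u ≤ M on the ball B_R ⊂ ℝ². If |{x ∈ B_R : u(x) > (3/4)M}| ≥ ν₀|B_R|, then there is a constant c > 0 depending only on ν₀ such that one of the following two alternatives holds: either ∫_{B_R \ B_{ε₀R}} |∇u|² dx ≥ c·M², or there exists a radius s ∈ [ε₀R, R] such that u(x) > (5/8)M for every x on the circle ∂B_s. -/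
open MeasureTheory

/-!
The proof compares, circle by circle, the Dirichlet energy with the measure of the superlevel set.
Suppose every circle `∂B_s`, `s ∈ [ε₀R, R]`, contains a point with `u ≤ (5/8)M`. If such a circle
(with `s < R`) also meets `A = {u > (3/4)M}`, then `u` oscillates by more than `M/8` along it, and
the fundamental theorem of calculus together with Cauchy–Schwarz gives
`∫ |∇u|² dθ ≥ M² / (128 π R²)` (`energy_circle`). Since the angular measure of `A` on the circle is
at most `2π`, in either case
`M² / (256 π² R²) · ∫ 1_A s dθ ≤ ∫ |∇u|² s dθ`.
Integrating in `s` (polar coordinates, `lintegral_polar`) yields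
`∫_{B_R \ B_{ε₀R}} |∇u|² ≥ M² / (256 π² R²) · |A \ B_{ε₀R}|`, and
`|A \ B_{ε₀R}| ≥ (ν₀ - ε₀²) |B_R| = (ν₀/2) π R²`, so that `c = ν₀ / (512 π)` works.
-/

/-- The point of `ℝ²` with polar coordinates `(s, θ)` relative to the centre `x₀`. -/
noncomputable def polarPt (x₀ : EuclideanSpace ℝ (Fin 2)) (s θ : ℝ) : EuclideanSpace ℝ (Fin 2) :=
  x₀ + Complex.orthonormalBasisOneI.repr (circleMap 0 s θ)

lemma dist_polarPt (x₀ : EuclideanSpace ℝ (Fin 2)) {s : ℝ} (hs : 0 < s) (θ : ℝ) :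
    dist (polarPt x₀ s θ) x₀ = s := by
  simp [polarPt, dist_eq_norm, abs_of_pos hs]

lemma hasDerivAt_polarPt (x₀ : EuclideanSpace ℝ (Fin 2)) (s θ : ℝ) :
    HasDerivAt (polarPt x₀ s)
      (Complex.orthonormalBasisOneI.repr (circleMap 0 s θ * Complex.I)) θ := by
  have h := (Complex.orthonormalBasisOneI.repr.toContinuousLinearEquiv.toContinuousLinearMap
    |>.hasFDerivAt (x := circleMap 0 s θ)).comp_hasDerivAt θ (hasDerivAt_circleMap 0 s θ)
  exact h.const_add x₀

lemma continuous_polarPt (x₀ : EuclideanSpace ℝ (Fin 2)) :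
    Continuous (fun p : ℝ × ℝ => polarPt x₀ p.1 p.2) := by
  unfold polarPt circleMap
  fun_prop

lemma continuous_polarPt_right (x₀ : EuclideanSpace ℝ (Fin 2)) (s : ℝ) :
    Continuous (polarPt x₀ s) := by
  unfold polarPt circleMap
  fun_prop

lemma exists_polarPt {x₀ x : EuclideanSpace ℝ (Fin 2)} {s : ℝ} (hx : x ∈ Metric.sphere x₀ s) :
    ∃ θ ∈ Set.Icc (-Real.pi) Real.pi, polarPt x₀ s θ = x := by
  set z := Complex.orthonormalBasisOneI.repr.symm (x - x₀) with hz
  have hn : ‖z‖ = s := by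
    rw [hz, LinearIsometryEquiv.norm_map, ← dist_eq_norm]; exact hx
  refine ⟨z.arg, ⟨(Complex.neg_pi_lt_arg z).le, Complex.arg_le_pi z⟩, ?_⟩
  have : circleMap 0 s z.arg = z := by
    rw [circleMap, zero_add, ← hn, Complex.norm_mul_exp_arg_mul_I]
  rw [polarPt, this, hz, LinearIsometryEquiv.apply_symm_apply, add_sub_cancel]

/-- Polar coordinates in the plane as an iterated integral. -/
lemma lintegral_polar (x₀ : EuclideanSpace ℝ (Fin 2)) {f : EuclideanSpace ℝ (Fin 2) → ENNReal}
    (hf : Measurable f) :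
    ∫⁻ x, f x = ∫⁻ s in Set.Ioi (0 : ℝ), ENNReal.ofReal s *
      ∫⁻ θ in Set.Ioo (-Real.pi) Real.pi, f (polarPt x₀ s θ) := by
  have hm : Measurable (fun p : ℝ × ℝ => f (polarPt x₀ p.1 p.2)) :=
    hf.comp (continuous_polarPt x₀).measurable
  have e1 : ∫⁻ x, f x = ∫⁻ z : ℂ, f (x₀ + Complex.orthonormalBasisOneI.repr z) := by
    rw [← lintegral_add_left_eq_self f x₀]
    exact ((Complex.orthonormalBasisOneI.repr.measurePreserving).lintegral_comp_emb
      Complex.orthonormalBasisOneI.repr.toHomeomorph.measurableEmbedding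
      (fun y => f (x₀ + y))).symm
  rw [e1, ← Complex.lintegral_comp_polarCoord_symm]
  have e2 : ∀ p : ℝ × ℝ, x₀ + Complex.orthonormalBasisOneI.repr (Complex.polarCoord.symm p)
      = polarPt x₀ p.1 p.2 := by
    intro p
    rw [polarPt, Complex.polarCoord_symm_apply, circleMap, Complex.exp_mul_I]
    simp
  simp_rw [e2, smul_eq_mul]
  rw [polarCoord_target, Measure.volume_eq_prod, ← Measure.prod_restrict, lintegral_prod]
  · refine lintegral_congr fun s => ?_
    have hms : Measurable (fun θ => f (polarPt x₀ s θ)) :=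
      hf.comp (continuous_polarPt_right x₀ s).measurable
    dsimp only
    rw [lintegral_const_mul _ hms]
  · exact ((ENNReal.measurable_ofReal.comp measurable_fst).mul hm).aemeasurable

/-- Oscillation at least `d` along a circle of radius `s < R` inside the ball forces angular energy
at least `d² / (2 π R²)`. -/
lemma energy_circle {R s d : ℝ} (hs : 0 < s) (hsR : s < R) (hd : 0 < d)
    (x₀ : EuclideanSpace ℝ (Fin 2)) {u : EuclideanSpace ℝ (Fin 2) → ℝ}
    (hu : ContDiffOn ℝ 1 u (Metric.ball x₀ R)) {x y : EuclideanSpace ℝ (Fin 2)}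
    (hx : x ∈ Metric.sphere x₀ s) (hy : y ∈ Metric.sphere x₀ s) (hxy : d ≤ u y - u x) :
    ENNReal.ofReal (d ^ 2 / (2 * Real.pi * R ^ 2)) ≤
      ∫⁻ θ in Set.Ioo (-Real.pi) Real.pi,
        ENNReal.ofReal (‖fderiv ℝ u (polarPt x₀ s θ)‖ ^ 2) := by
  have hpi := Real.pi_pos
  obtain ⟨a, ha, rfl⟩ := exists_polarPt hx
  obtain ⟨b, hb, rfl⟩ := exists_polarPt hy
  have hmem : ∀ θ, polarPt x₀ s θ ∈ Metric.ball x₀ R := fun θ => by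
    rw [Metric.mem_ball, dist_polarPt x₀ hs]; exact hsR
  have hpc : Continuous (polarPt x₀ s) := continuous_polarPt_right x₀ s
  have hfc : Continuous (fun θ => fderiv ℝ u (polarPt x₀ s θ)) :=
    (hu.continuousOn_fderiv_of_isOpen Metric.isOpen_ball le_rfl).comp_continuous hpc hmem
  set G : ℝ → ℝ := fun θ => ‖fderiv ℝ u (polarPt x₀ s θ)‖ with hG
  have hGc : Continuous G := hfc.norm
  set h' : ℝ → ℝ := fun θ => fderiv ℝ u (polarPt x₀ s θ)
    (Complex.orthonormalBasisOneI.repr (circleMap 0 s θ * Complex.I)) with hh'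
  have hh'c : Continuous h' := by
    apply hfc.clm_apply
    have := continuous_circleMap 0 s
    fun_prop
  have hder : ∀ θ, HasDerivAt (fun t => u (polarPt x₀ s t)) (h' θ) θ := fun θ =>
    ((hu.differentiableOn one_ne_zero).differentiableAt
      (Metric.isOpen_ball.mem_nhds (hmem θ))).hasFDerivAt.comp_hasDerivAt θ
        (hasDerivAt_polarPt x₀ s θ)
  have hbound : ∀ θ, ‖h' θ‖ ≤ s * G θ := fun θ => by
    refine (ContinuousLinearMap.le_opNorm _ _).trans (le_of_eq ?_)
    rw [LinearIsometryEquiv.norm_map]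
    simp [hG, abs_of_pos hs, mul_comm]
  have hint : ∀ {f : ℝ → ℝ}, Continuous f →
      IntegrableOn f (Set.Ioc (-Real.pi) Real.pi) := fun {f} hf =>
    (hf.integrableOn_Icc).mono_set Set.Ioc_subset_Icc_self
  have hL : d ≤ s * ∫ θ in Set.Ioc (-Real.pi) Real.pi, G θ := by
    have h1 : ∫ θ in a..b, h' θ = u (polarPt x₀ s b) - u (polarPt x₀ s a) :=
      intervalIntegral.integral_eq_sub_of_hasDerivAt (fun θ _ => hder θ)
        (hh'c.intervalIntegrable a b)
    calc d ≤ ‖∫ θ in a..b, h' θ‖ := by rw [h1]; exact hxy.trans (le_abs_self _)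
      _ ≤ ∫ θ in Set.uIoc a b, ‖h' θ‖ := intervalIntegral.norm_integral_le_integral_norm_uIoc
      _ ≤ ∫ θ in Set.Ioc (-Real.pi) Real.pi, ‖h' θ‖ := by
          refine setIntegral_mono_set (hint hh'c.norm)
            (Filter.Eventually.of_forall fun _ => norm_nonneg _) (LE.le.eventuallyLE ?_)
          exact Set.Ioc_subset_Ioc (le_min ha.1 hb.1) (max_le ha.2 hb.2)
      _ ≤ ∫ θ in Set.Ioc (-Real.pi) Real.pi, s * G θ :=
          integral_mono (hint hh'c.norm) (hint (hGc.const_mul s)) hbound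
      _ = _ := integral_const_mul _ _
  -- Cauchy–Schwarz in the form `G² ≥ 2mG - m²`, with `m` a lower bound for the mean of `G`.
  have hR : 0 < R := hs.trans hsR
  set m : ℝ := d / (2 * Real.pi * R) with hm
  have hm0 : 0 < m := by positivity
  have hG0 : 0 ≤ ∫ θ in Set.Ioc (-Real.pi) Real.pi, G θ :=
    integral_nonneg fun _ => norm_nonneg _
  have hL' : 2 * Real.pi * m ≤ ∫ θ in Set.Ioc (-Real.pi) Real.pi, G θ := by
    have : 2 * Real.pi * m = d / R := by rw [hm]; field_simp
    rw [this, div_le_iff₀ hR]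
    nlinarith
  have hCS : 2 * Real.pi * m ^ 2 ≤ ∫ θ in Set.Ioc (-Real.pi) Real.pi, G θ ^ 2 := by
    have h2 : ∫ θ in Set.Ioc (-Real.pi) Real.pi, (2 * m * G θ - m ^ 2) ≤
        ∫ θ in Set.Ioc (-Real.pi) Real.pi, G θ ^ 2 :=
      integral_mono (hint ((hGc.const_mul _).sub continuous_const)) (hint (hGc.pow 2))
        fun θ => by nlinarith [sq_nonneg (G θ - m)]
    rw [integral_sub (hint (hGc.const_mul _)) (hint continuous_const), integral_const_mul,
      setIntegral_const] at h2
    have hv : volume.real (Set.Ioc (-Real.pi) Real.pi) = 2 * Real.pi := by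
      rw [Real.volume_real_Ioc_of_le (by linarith)]; ring
    rw [hv, smul_eq_mul] at h2
    nlinarith
  have he : d ^ 2 / (2 * Real.pi * R ^ 2) = 2 * Real.pi * m ^ 2 := by rw [hm]; field_simp
  rw [he, setLIntegral_congr Ioo_ae_eq_Ioc,
    ← ofReal_integral_eq_lintegral_ofReal (f := fun θ => G θ ^ 2) (hint (hGc.pow 2))
      (Filter.Eventually.of_forall fun _ => sq_nonneg _)]
  exact ENNReal.ofReal_le_ofReal hCS

/-- The gradient of a function that is `C¹` up to the boundary is square integrable. -/
lemma integrableOn_energy {R : ℝ} (hR : 0 < R)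
    (x₀ : EuclideanSpace ℝ (Fin 2)) {u : EuclideanSpace ℝ (Fin 2) → ℝ}
    (hu : ContDiffOn ℝ 1 u (Metric.closedBall x₀ R)) :
    IntegrableOn (fun x => ‖fderiv ℝ u x‖ ^ 2) (Metric.ball x₀ R) := by
  have huniq : UniqueDiffOn ℝ (Metric.closedBall x₀ R) :=
    uniqueDiffOn_convex (convex_closedBall x₀ R)
      ⟨x₀, Metric.ball_subset_interior_closedBall (Metric.mem_ball_self hR)⟩
  have hc : ContinuousOn (fun x => ‖fderivWithin ℝ u (Metric.closedBall x₀ R) x‖ ^ 2)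
      (Metric.closedBall x₀ R) :=
    ((hu.continuousOn_fderivWithin huniq le_rfl).norm).pow 2
  have hi := (hc.integrableOn_compact (μ := volume) (isCompact_closedBall x₀ R)).mono_set
    Metric.ball_subset_closedBall
  refine hi.congr_fun (fun x hx => ?_) measurableSet_ball
  have : Metric.closedBall x₀ R ∈ nhds x :=
    Filter.mem_of_superset (Metric.isOpen_ball.mem_nhds hx) Metric.ball_subset_closedBall
  simp only [fderivWithin_of_mem_nhds this]

/-- **Either large Dirichlet energy in the annulus or a circle of large values.**
Let `ν₀ ∈ (0,1]`, `ε₀ := √(ν₀/2)`, `M > 0`, and `u ∈ C¹(closure B_R)` with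
`0 ≤ u ≤ M` on the ball `B_R ⊆ ℝ²`. If `|{u > (3/4)M} ∩ B_R| ≥ ν₀ |B_R|`, then there
is `c > 0` depending only on `ν₀` such that either
`∫_{B_R \ B_{ε₀ R}} |∇u|² ≥ c M²`, or there is `s ∈ [ε₀ R, R]` with `u > (5/8)M`
on the whole circle `∂B_s`. -/
theorem circle_with_high_values (ν₀ : ℝ) (hν₀ : ν₀ ∈ Set.Ioc (0 : ℝ) 1) :
    ∃ c : ℝ, 0 < c ∧
      ∀ (R : ℝ), 0 < R → ∀ (x₀ : EuclideanSpace ℝ (Fin 2)) (M : ℝ), 0 < M →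
      ∀ u : EuclideanSpace ℝ (Fin 2) → ℝ,
        ContDiffOn ℝ 1 u (Metric.closedBall x₀ R) →
        (∀ x ∈ Metric.ball x₀ R, 0 ≤ u x ∧ u x ≤ M) →
        ENNReal.ofReal ν₀ * volume (Metric.ball x₀ R) ≤
          volume {x ∈ Metric.ball x₀ R | 3 / 4 * M < u x} →
        (c * M ^ 2 ≤
            ∫ x in Metric.ball x₀ R \ Metric.ball x₀ (Real.sqrt (ν₀ / 2) * R),
              ‖fderiv ℝ u x‖ ^ 2) ∨
        (∃ s ∈ Set.Icc (Real.sqrt (ν₀ / 2) * R) R,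
            ∀ x ∈ Metric.sphere x₀ s, 5 / 8 * M < u x) := by
  have hpi := Real.pi_pos
  obtain ⟨hν, -⟩ := hν₀
  refine ⟨ν₀ / (512 * Real.pi), by positivity, ?_⟩
  intro R hR x₀ M hM u hu _ hvol
  by_cases hex : ∃ s ∈ Set.Icc (Real.sqrt (ν₀ / 2) * R) R,
      ∀ x ∈ Metric.sphere x₀ s, 5 / 8 * M < u x
  · exact Or.inr hex
  left
  push Not at hex
  set ε := Real.sqrt (ν₀ / 2) with hε
  have hε0 : 0 < ε := Real.sqrt_pos.2 (by positivity)
  have hε2 : ε ^ 2 = ν₀ / 2 := Real.sq_sqrt (by positivity)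
  have hu' : ContDiffOn ℝ 1 u (Metric.ball x₀ R) := hu.mono Metric.ball_subset_closedBall
  set D := Metric.ball x₀ R \ Metric.ball x₀ (ε * R) with hD
  have hDm : MeasurableSet D := measurableSet_ball.diff measurableSet_ball
  set A := {x ∈ Metric.ball x₀ R | 3 / 4 * M < u x} with hA
  have hAm : MeasurableSet A :=
    (hu'.continuousOn.isOpen_inter_preimage Metric.isOpen_ball
      (isOpen_Ioi (a := 3 / 4 * M))).measurableSet
  set A' := A \ Metric.ball x₀ (ε * R) with hA'
  have hA'm : MeasurableSet A' := hAm.diff measurableSet_ball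
  have hA'D : A' ⊆ D := Set.sdiff_subset_sdiff_left (Set.sep_subset _ _)
  have hA'vol : ENNReal.ofReal (ν₀ / 2 * (Real.pi * R ^ 2)) ≤ volume A' := by
    have h1 : volume A ≤ volume A' + volume (Metric.ball x₀ (ε * R)) :=
      (measure_mono (by intro x hx; by_cases h : x ∈ Metric.ball x₀ (ε * R) <;> simp [hA', hx, h]
        )).trans (measure_union_le _ _)
    have h2 := hvol.trans h1
    rw [EuclideanSpace.volume_ball_fin_two, EuclideanSpace.volume_ball_fin_two,
      ← ENNReal.ofReal_pow hR.le, ← ENNReal.ofReal_pow (by positivity),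
      ← ENNReal.ofReal_mul (by positivity), ← ENNReal.ofReal_mul (by positivity),
      ← ENNReal.ofReal_mul (by positivity)] at h2
    have h3 := tsub_le_iff_right.2 h2
    rw [← ENNReal.ofReal_sub _ (by positivity)] at h3
    refine le_trans (le_of_eq ?_) h3
    rw [mul_pow, hε2]
    congr 1
    ring
  have hgm : Measurable (fun x => ENNReal.ofReal (‖fderiv ℝ u x‖ ^ 2)) :=
    ((measurable_fderiv ℝ u).norm.pow_const 2).ennreal_ofReal
  set K : ℝ := M ^ 2 / (256 * Real.pi ^ 2 * R ^ 2) with hK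
  have hK0 : 0 < K := by positivity
  have key : ENNReal.ofReal K * volume A' ≤
      ∫⁻ x in D, ENNReal.ofReal (‖fderiv ℝ u x‖ ^ 2) := by
    rw [← lintegral_indicator_one hA'm, ← lintegral_indicator hDm,
      ← lintegral_const_mul _ (measurable_one.indicator hA'm),
      lintegral_polar x₀ ((measurable_one.indicator hA'm).const_mul _),
      lintegral_polar x₀ (hgm.indicator hDm)]
    refine setLIntegral_mono_ae' measurableSet_Ioi (Filter.Eventually.of_forall fun s hs => ?_)
    have hs : 0 < s := hs
    gcongr ENNReal.ofReal s * ?_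
    by_cases hθ : ∃ θ, polarPt x₀ s θ ∈ A'
    · obtain ⟨θ₀, hθ₀⟩ := hθ
      have hd := dist_polarPt x₀ hs
      have hsR : s < R := by simpa [hd] using (hA'D hθ₀).1
      have hsε : ε * R ≤ s := by simpa [hd] using (hA'D hθ₀).2
      obtain ⟨x, hx, hxu⟩ := hex s ⟨hsε, hsR.le⟩
      have hall : ∀ θ, polarPt x₀ s θ ∈ D := fun θ => by
        simp [hD, hd, hsR, hsε]
      have hE := energy_circle (d := M / 8) hs hsR (by positivity) x₀ hu' hx
        (y := polarPt x₀ s θ₀) (hd θ₀) (by have := hθ₀.1.2; linarith)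
      calc ∫⁻ θ in Set.Ioo (-Real.pi) Real.pi,
            ENNReal.ofReal K * A'.indicator 1 (polarPt x₀ s θ)
          ≤ ∫⁻ _ in Set.Ioo (-Real.pi) Real.pi, ENNReal.ofReal K := by
            refine lintegral_mono fun θ => ?_
            refine mul_le_of_le_one_right' (Set.indicator_le_self' (fun _ _ => zero_le) _)
        _ = ENNReal.ofReal ((M / 8) ^ 2 / (2 * Real.pi * R ^ 2)) := by
            rw [setLIntegral_const, Real.volume_Ioo, ← ENNReal.ofReal_mul hK0.le, hK]
            congr 1
            field_simp
            ring
        _ ≤ _ := hE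
        _ = _ := by
            refine lintegral_congr fun θ => ?_
            rw [Set.indicator_of_mem (hall θ)]
    · push Not at hθ
      simp [Set.indicator_of_notMem (hθ _)]
  have hint : IntegrableOn (fun x => ‖fderiv ℝ u x‖ ^ 2) D :=
    (integrableOn_energy hR x₀ hu).mono_set Set.sdiff_subset
  rw [← ofReal_integral_eq_lintegral_ofReal hint
    (Filter.Eventually.of_forall fun _ => sq_nonneg _)] at key
  have hfin := (mul_le_mul_right hA'vol (ENNReal.ofReal K)).trans key
  rw [← ENNReal.ofReal_mul hK0.le] at hfin
  have := (ENNReal.ofReal_le_ofReal_iff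
    (integral_nonneg fun _ => sq_nonneg _)).1 hfin
  refine le_trans (le_of_eq ?_) this
  rw [hK]
  field_simp
  ring
end

section
/- Let d ≥ 1, δ > 0 and c_δ > 0. Let H : ℝ^d → ℝ be a C² convex function with D²H(z) ≥ c_δ·Id (as quadratic forms) for every z with |z| ≥ 1+δ, and set F := ∇H. Then for all z, w ∈ ℝ^d, |(z₁ − (1+δ))₊ − (w₁ − (1+δ))₊| ≤ c_δ^{-1}·|F(z) − F(w)|, where z₁, w₁ denote the first components of z and w. In particular, if F(z) = F(w) then (z₁ − (1+δ))₊ = (w₁ − (1+δ))₊, so the map a ↦ (z₁ − (1+δ))₊ for any z with F(z) = a is well defined on the range of F and is Lipschitz with constant at most c_δ^{-1}. -/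
/-!
Write `F = ∇H`, `r = 1 + δ`, and suppose `w₁ ≤ z₁`, `r < z₁`. Along the segment
`p t = w + t (z - w)` the function `g t = ⟪F (p t), z - w⟫` is the derivative of the convex function
`t ↦ H (p t)`, hence nondecreasing (`monotone_inner_gradient_line`). Once the first component of
`p t` has reached `r`, say at `t = t₀`, the norm of `p t` is at least `r` on `[t₀, 1]`, and the
ellipticity gives `g' ≥ cδ ‖z - w‖²` there. Therefore
`cδ (1 - t₀) ‖z - w‖² ≤ g 1 - g 0 ≤ ‖F z - F w‖ ‖z - w‖`. Dividing by `‖z - w‖` and using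
`z₁ - w₁ ≤ ‖z - w‖` bounds `(1 - t₀) (z₁ - w₁)`, which is exactly the difference of the truncated
components for `t₀ = (r - w₁)₊ / (z₁ - w₁)`.
-/


open scoped RealInnerProductSpace
section

variable {E : Type*} [NormedAddCommGroup E] [InnerProductSpace ℝ E]

lemma hasDerivAt_line (w v : E) (t : ℝ) : HasDerivAt (fun s : ℝ => w + s • v) v t := by
  simpa using ((hasDerivAt_id t).smul_const v).const_add w

variable [CompleteSpace E]

lemma contDiff_gradient {H : E → ℝ} (hH : ContDiff ℝ 2 H) : ContDiff ℝ 1 (gradient H) := by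
  have h1 : ContDiff ℝ 1 (fderiv ℝ H) := hH.fderiv_right (by norm_num)
  exact (InnerProductSpace.toDual ℝ E).symm.contDiff.comp h1

/-- The directional derivative of a convex function along a line is nondecreasing. -/
lemma monotone_inner_gradient_line {H : E → ℝ} (hH : Differentiable ℝ H)
    (hconv : ConvexOn ℝ Set.univ H) (w v : E) :
    Monotone (fun t : ℝ => ⟪gradient H (w + t • v), v⟫) := by
  have hd : ∀ t : ℝ, HasDerivAt (fun s : ℝ => H (w + s • v)) ⟪gradient H (w + t • v), v⟫ t := by
    intro t
    have h := (hH (w + t • v)).hasGradientAt.hasFDerivAt.comp_hasDerivAt t (hasDerivAt_line w v t)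
    exact h
  have hc : ConvexOn ℝ Set.univ (fun s : ℝ => H (w + s • v)) := by
    refine ⟨convex_univ, fun x _ y _ a b ha hb hab => ?_⟩
    have h := hconv.2 (Set.mem_univ (w + x • v)) (Set.mem_univ (w + y • v)) ha hb hab
    have e : w + (a • x + b • y) • v = a • (w + x • v) + b • (w + y • v) := by
      have hw : w = (a + b) • w := by rw [hab, one_smul]
      conv_lhs => rw [hw]
      simp only [smul_eq_mul]
      module
    simpa only [e] using h
  have hm := hc.monotoneOn_deriv (fun x _ => (hd x).differentiableAt)
  intro s t hst
  have := hm (Set.mem_univ s) (Set.mem_univ t) hst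
  rwa [(hd s).deriv, (hd t).deriv] at this

/-- If the Hessian of a convex `H` is bounded below by `c` on the part `[t₀, 1]` of the segment from
`w` to `w + v`, the gradient varies by at least `c (1 - t₀) ‖v‖` between the end points. -/
lemma mul_norm_le_norm_gradient_sub {H : E → ℝ} (hH : ContDiff ℝ 2 H)
    (hconv : ConvexOn ℝ Set.univ H) (w v : E) {c t₀ : ℝ} (h0 : 0 ≤ t₀) (h1 : t₀ ≤ 1)
    (hell : ∀ t ∈ Set.Icc t₀ 1, c * ‖v‖ ^ 2 ≤ ⟪fderiv ℝ (gradient H) (w + t • v) v, v⟫) :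
    c * (1 - t₀) * ‖v‖ ≤ ‖gradient H (w + v) - gradient H w‖ := by
  have hmono := monotone_inner_gradient_line (hH.differentiable (by norm_num)) hconv w v
  have hG : Differentiable ℝ (gradient H) := (contDiff_gradient hH).differentiable (by norm_num)
  have hd : ∀ t : ℝ, HasDerivAt (fun s : ℝ => ⟪gradient H (w + s • v), v⟫)
      ⟪fderiv ℝ (gradient H) (w + t • v) v, v⟫ t := by
    intro t
    have h := (hG (w + t • v)).hasFDerivAt.comp_hasDerivAt t (hasDerivAt_line w v t)
    simpa using h.inner ℝ (hasDerivAt_const t v)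
  have hmv := (convex_Icc t₀ 1).mul_sub_le_image_sub_of_le_deriv
    (f := fun s : ℝ => ⟪gradient H (w + s • v), v⟫) (C := c * ‖v‖ ^ 2)
    (fun t _ => (hd t).continuousAt.continuousWithinAt)
    (fun t _ => (hd t).differentiableAt.differentiableWithinAt)
    (fun t ht => by
      rw [(hd t).deriv]
      exact hell t (interior_subset ht))
    t₀ (Set.left_mem_Icc.2 h1) 1 (Set.right_mem_Icc.2 h1) h1
  have h00 := hmono h0
  simp only [one_smul, zero_smul, add_zero] at hmv h00
  have hcs := real_inner_le_norm (gradient H (w + v) - gradient H w) v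
  rw [inner_sub_left] at hcs
  rcases (norm_nonneg v).eq_or_lt with hv | hv
  · rw [← hv, mul_zero]
    exact norm_nonneg _
  · refine le_of_mul_le_mul_right ?_ hv
    nlinarith

end

/-- The one-sided form of the estimate, for the ordered case `w₁ ≤ z₁`. -/
lemma truncated_sub_le (d : ℕ) (i : Fin d) (r c : ℝ) (hc : 0 < c)
    (H : EuclideanSpace ℝ (Fin d) → ℝ) (hH : ContDiff ℝ 2 H)
    (hconv : ConvexOn ℝ Set.univ H)
    (hell : ∀ z : EuclideanSpace ℝ (Fin d), r ≤ ‖z‖ →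
      ∀ y : EuclideanSpace ℝ (Fin d), c * ‖y‖ ^ 2 ≤ ⟪fderiv ℝ (gradient H) z y, y⟫)
    (z w : EuclideanSpace ℝ (Fin d)) (hzw : w i ≤ z i) :
    max (z i - r) 0 - max (w i - r) 0 ≤ c⁻¹ * ‖gradient H z - gradient H w‖ := by
  have hnn : 0 ≤ c⁻¹ * ‖gradient H z - gradient H w‖ := by positivity
  rcases le_or_gt (z i) r with hzr | hzr
  · rw [max_eq_right (by linarith : z i - r ≤ 0), max_eq_right (by linarith : w i - r ≤ 0)]
    simpa using hnn
  rcases hzw.eq_or_lt with heq | hlt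
  · rw [heq, sub_self]
    exact hnn
  have hpos : 0 < z i - w i := sub_pos.2 hlt
  -- The time at which the segment from `w` to `z` enters the half-space `{x | r ≤ x i}`.
  obtain ⟨t₀, ht₀⟩ : ∃ t₀, t₀ = max (r - w i) 0 / (z i - w i) := ⟨_, rfl⟩
  have hmul : t₀ * (z i - w i) = max (r - w i) 0 := by rw [ht₀, div_mul_cancel₀ _ hpos.ne']
  have h0 : 0 ≤ t₀ := by rw [ht₀]; positivity
  have h1 : t₀ ≤ 1 := by
    rw [ht₀, div_le_one hpos]
    exact max_le (by linarith) hpos.le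
  have key := mul_norm_le_norm_gradient_sub hH hconv w (z - w) (c := c) h0 h1 (by
    intro t ht
    refine hell _ ?_ _
    have hcoord : r ≤ (w + t • (z - w)) i := by
      have e : (w + t • (z - w)) i = w i + t * (z i - w i) := by simp
      rw [e]
      have := mul_le_mul_of_nonneg_right ht.1 hpos.le
      have := le_max_left (r - w i) 0
      linarith
    exact hcoord.trans ((le_abs_self _).trans (PiLp.norm_apply_le (w + t • (z - w)) i)))
  rw [add_sub_cancel] at key
  have hn : z i - w i ≤ ‖z - w‖ := by
    have := (le_abs_self _).trans (PiLp.norm_apply_le (z - w) i)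
    simpa using this
  have hdiff : max (z i - r) 0 - max (w i - r) 0 = (1 - t₀) * (z i - w i) := by
    rw [sub_mul, hmul, max_eq_left (by linarith : 0 ≤ z i - r)]
    rcases le_total (w i) r with h | h
    · rw [max_eq_right (by linarith), max_eq_left (by linarith)]; ring
    · rw [max_eq_left (by linarith), max_eq_right (by linarith)]; ring
  rw [hdiff, le_inv_mul_iff₀ hc]
  calc c * ((1 - t₀) * (z i - w i)) ≤ c * ((1 - t₀) * ‖z - w‖) := by
        have : 0 ≤ 1 - t₀ := by linarith
        gcongr
    _ ≤ _ := by linarith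

/-- **Lipschitz dependence of the truncated first component on `F = ∇H` (Lemma 4.1).**
If `H : ℝ^d → ℝ` is `C²` convex with `D²H ≥ c_δ Id` outside `B_{1+δ}`, then
`|(z₁ − (1+δ))₊ − (w₁ − (1+δ))₊| ≤ c_δ⁻¹ |F(z) − F(w)|` for all `z, w`; in particular,
`F(z) = F(w)` implies `(z₁ − (1+δ))₊ = (w₁ − (1+δ))₊`, so `a ↦ (z₁ − (1+δ))₊` (for any
`z` with `F(z) = a`) is well defined and `c_δ⁻¹`-Lipschitz on the range of `F`. -/
theorem truncated_component_lipschitz_of_gradient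
    (d : ℕ) (hd : 0 < d) (δ cδ : ℝ) (hδ : 0 < δ) (hcδ : 0 < cδ)
    (H : EuclideanSpace ℝ (Fin d) → ℝ) (hH : ContDiff ℝ 2 H)
    (hconv : ConvexOn ℝ Set.univ H)
    (hell : ∀ z : EuclideanSpace ℝ (Fin d), 1 + δ ≤ ‖z‖ →
      ∀ y : EuclideanSpace ℝ (Fin d),
        cδ * ‖y‖ ^ 2 ≤ ⟪fderiv ℝ (gradient H) z y, y⟫) :
    (∀ z w : EuclideanSpace ℝ (Fin d),
      |max (z ⟨0, hd⟩ - (1 + δ)) 0 - max (w ⟨0, hd⟩ - (1 + δ)) 0| ≤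
        cδ⁻¹ * ‖gradient H z - gradient H w‖) ∧
    (∀ z w : EuclideanSpace ℝ (Fin d), gradient H z = gradient H w →
      max (z ⟨0, hd⟩ - (1 + δ)) 0 = max (w ⟨0, hd⟩ - (1 + δ)) 0) := by
  have main : ∀ z w : EuclideanSpace ℝ (Fin d),
      |max (z ⟨0, hd⟩ - (1 + δ)) 0 - max (w ⟨0, hd⟩ - (1 + δ)) 0| ≤
        cδ⁻¹ * ‖gradient H z - gradient H w‖ := by
    intro z w
    rcases le_total (w ⟨0, hd⟩) (z ⟨0, hd⟩) with h | h
    · rw [abs_of_nonneg (sub_nonneg.2 (max_le_max_right _ (by linarith)))]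
      exact truncated_sub_le d ⟨0, hd⟩ (1 + δ) cδ hcδ H hH hconv hell z w h
    · rw [abs_sub_comm, norm_sub_rev,
        abs_of_nonneg (sub_nonneg.2 (max_le_max_right _ (by linarith)))]
      exact truncated_sub_le d ⟨0, hd⟩ (1 + δ) cδ hcδ H hH hconv hell w z h
  refine ⟨main, fun z w h => ?_⟩
  have := main z w
  rw [h, sub_self, norm_zero, mul_zero] at this
  exact sub_eq_zero.1 (abs_nonpos_iff.1 this)
end

section
/- Let d ≥ 1, ε > 0 and a, b ∈ ℝ^d with |a| > 1 + 2ε. Suppose that |(|a| − 1)₊ − (|b| − 1)₊| < ε and |(|a| − 1)₊ − ((b·(a/|a|)) − 1)₊| < ε. Then |a − b|² ≤ ε·(4|a| + ε). -/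
/-!
Write `t = b·(a/|a|)`. Since `|a| - 1 > 2ε`, both hypotheses survive removal of the truncations
in the direction needed: `|b| < |a| + ε` and `t > |a| - ε`. Inserting these into
`|a - b|² = |a|² + |b|² - 2|a|t` gives the bound.
-/

open scoped RealInnerProductSpace

/-- **Quantitative closeness of vectors from closeness of truncations.** Let `d ≥ 1`,
`ε > 0`, `a, b ∈ ℝ^d` with `|a| > 1 + 2ε`. If `|(|a|−1)₊ − (|b|−1)₊| < ε` and
`|(|a|−1)₊ − ((b·(a/|a|)) − 1)₊| < ε`, then `|a − b|² ≤ ε (4|a| + ε)`. -/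
theorem vector_closeness_from_truncations (d : ℕ) (hd : 0 < d) (ε : ℝ) (hε : 0 < ε)
    (a b : EuclideanSpace ℝ (Fin d)) (ha : 1 + 2 * ε < ‖a‖)
    (h1 : |max (‖a‖ - 1) 0 - max (‖b‖ - 1) 0| < ε)
    (h2 : |max (‖a‖ - 1) 0 - max (⟪b, ‖a‖⁻¹ • a⟫ - 1) 0| < ε) :
    ‖a - b‖ ^ 2 ≤ ε * (4 * ‖a‖ + ε) := by
  have hA : 0 < ‖a‖ := by linarith
  rw [max_eq_left (by linarith : (0 : ℝ) ≤ ‖a‖ - 1), abs_lt] at h1 h2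
  have hB : ‖b‖ < ‖a‖ + ε := by linarith [le_max_left (‖b‖ - 1) 0, h1.1]
  -- The truncation of the directional part exceeds `‖a‖ - 1 - ε > 0`, so it is active.
  have ht : ‖a‖ - ε < ⟪b, ‖a‖⁻¹ • a⟫ := by
    rcases max_cases (⟪b, ‖a‖⁻¹ • a⟫ - 1) 0 with h | h <;> linarith [h2.2, h.1]
  have hab : ⟪a, b⟫ = ‖a‖ * ⟪b, ‖a‖⁻¹ • a⟫ := by
    rw [real_inner_smul_right, real_inner_comm, mul_inv_cancel_left₀ hA.ne']
  rw [norm_sub_sq_real, hab]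
  -- `‖a‖² + ‖b‖² - 2‖a‖t ≤ ‖a‖² + (‖a‖ + ε)² - 2‖a‖(‖a‖ - ε) = ε(4‖a‖ + ε)`
  have hB2 : ‖b‖ ^ 2 ≤ (‖a‖ + ε) ^ 2 := by gcongr
  have hAt := mul_le_mul_of_nonneg_left ht.le hA.le
  linarith
end
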